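/- (Algebraic core of Theorem 7 on Σ^{i,1}(r).) Let i ≥ 1, h ≥ 1 and d = ih − i + 1. In ℤ[x_1,…,x_i,y_1,…,y_h], the homogeneous component of degree d of the polynomial ∏_{k=1}^{i} ∏_{l=1}^{h} (1 + y_l − x_k) · ∑_{r=0}^{d} (−1)^r h_r(x_1,…,x_i) equals ∑_{(λ,μ)∈J} (−1)^{|μ|} · ( ∑_{x} E_{∁λ~/(μ−x)~}(i) ) · s_{μ~}(x_1,…,x_i) · s_λ(y_1,…,y_h), where J = { (λ,μ) : λ a partition with λ_1 ≤ i and l(λ) ≤ h, μ a partition with μ_1 ≤ i, and |λ| + |μ| = d }, the inner sum is over all 0–1 vectors x of length l(μ) such that μ − x is a partition, and ∁λ~ denotes the complement of λ~ in the block (h^i), i.e. (∁λ~)_m = h − (λ~)_{i+1−m} for 1 ≤ m ≤ i. -/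

import Mathlib

/-!
STATEMENT 10 (algebraic core of Theorem 7 on `Σ^{i,1}(r)`):
with `d = ih − i + 1`, the degree-`d` homogeneous component of
`∏_{k,l} (1 + y_l − x_k) · ∑_{r=0}^{d} (−1)^r h_r(x)` in `ℤ[x_1,…,x_i,y_1,…,y_h]`
equals
`∑_{(λ,μ)∈J} (−1)^{|μ|} · ( ∑_x E_{∁λ~/(μ−x)~}(i) ) · s_{μ~}(x) · s_λ(y)`,
where `J = {(λ,μ) : λ_1 ≤ i, l(λ) ≤ h, μ_1 ≤ i, |λ|+|μ| = d}`, the inner sum is over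
0–1 vectors `x` such that `μ − x` is a partition, and `∁λ~` is the complement of `λ~`
in the block `(h^i)`.  Partitions are encoded 0-based; `μ` is parametrized by its first
`d` parts (any `μ` occurring has `l(μ) ≤ |μ| ≤ d`); the Schur polynomials are
characterized by the bialternant formula.
-/

open Finset MvPolynomial

/-- `E_{λ/μ}(n) = det[ C(λ_k + n − k, μ_l + n − l) ]_{1≤k,l≤n}` (indices written 0-based). -/
def Edet (n : ℕ) (lam mu : ℕ → ℕ) : ℤ :=
  (Matrix.of fun k l : Fin n =>
    ((lam k + (n - 1 - (k : ℕ))).choose (mu l + (n - 1 - (l : ℕ))) : ℤ)).det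

/-- The conjugate partition, 0-based: `conjP lam m = (λ~)_{m+1} = #{k : λ_k ≥ m+1}`. -/
noncomputable def conjP (lam : ℕ → ℕ) (m : ℕ) : ℕ := Nat.card {k : ℕ // m + 1 ≤ lam k}

/-- Extension of a bounded tuple to a function `ℕ → ℕ` (zero beyond the box). -/
def extF {n : ℕ} {m : Fin n → ℕ} (f : (k : Fin n) → Fin (m k + 1)) : ℕ → ℕ :=
  fun k => if h : k < n then (f ⟨k, h⟩ : ℕ) else 0

/-- The complete homogeneous symmetric polynomial `h_a(x_1,…,x_i)` in the x-variables. -/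
noncomputable def hsymX (i h a : ℕ) : MvPolynomial (Fin i ⊕ Fin h) ℤ :=
  ∑ f ∈ Finset.Nat.antidiagonalTuple i a, ∏ k, X (Sum.inl k) ^ f k

/-- The complement `∁λ~` of `λ~` in the block `(h^i)`:
`(∁λ~)_m = h − (λ~)_{i+1−m}` for `1 ≤ m ≤ i` (written 0-based). -/
noncomputable def complConj (i h : ℕ) (lam : ℕ → ℕ) : ℕ → ℕ :=
  fun m => if m < i then h - conjP lam (i - 1 - m) else 0

/-!
In degree `d` the alternating sum of the `h_r(x)` may be replaced by the product of the (truncated)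
series `1/(1 + x_a)`; multiply both sides by the Vandermonde products in `x` and in `y`. With
`w = x - 1` the product over `k, l` becomes `∏ (y_l - w_k)`, and the Laplace expansion of the
Vandermonde determinant in `(y, w)` along the rows of `y` (the dual Cauchy identity) writes the
result as a signed sum of alternants `a_λ(y) a_{∁λ~}(x - 1)`. By Cauchy–Binet,
`a_{∁λ~}(x - 1) ∏ 1/(1 + x_a)` is a combination of the alternants `a_ν(x)` whose coefficients are
determinants of coefficients of `(X - 1)^β / (1 + X)`, that is, up to sign, of partial sums of
binomial coefficients. Column operations turn these partial sums into sums over intervals, so the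
determinants are sums of `E_{∁λ~/ρ}` over the `ρ` interlacing with `ν = μ~`; these are the
conjugates of the `μ - x` with `x` a 0–1 vector.
-/

section Determinants

variable {R : Type*} [CommRing R]

theorem sum_injective_eq_sum_strictAnti_sum_perm {ι A : Type*} [LinearOrder ι] [Fintype ι]
    [AddCommMonoid A] {n : ℕ} (F : (Fin n → ι) → A) :
    ∑ g : Fin n → ι with Function.Injective g, F g =
      ∑ α : Fin n → ι with StrictAnti α, ∑ σ : Equiv.Perm (Fin n), F (α ∘ σ) := by
  rw [← sum_product']
  symm
  refine sum_nbij (fun p => p.1 ∘ p.2) ?_ ?_ ?_ fun _ _ => rfl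
  · rintro ⟨α, σ⟩ hα
    simp only [mem_product, mem_filter, mem_univ, true_and, and_true] at hα ⊢
    exact hα.injective.comp σ.injective
  · rintro ⟨α, σ⟩ hα ⟨α', σ'⟩ hα' heq
    simp only [coe_product, coe_filter, mem_univ, true_and, coe_univ, Set.mem_prod,
      Set.mem_ofPred_eq, Set.mem_univ, and_true] at hα hα' heq
    have hrange : Set.range (α ∘ Fin.rev) = Set.range (α' ∘ Fin.rev) := by
      rw [Fin.rev_surjective.range_comp, Fin.rev_surjective.range_comp,
        ← σ.surjective.range_comp α, heq, σ'.surjective.range_comp]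
    obtain rfl : α = α' := Fin.rev_surjective.injective_comp_right <|
      (StrictMono.range_inj (hα.comp Fin.rev_strictAnti) (hα'.comp Fin.rev_strictAnti)).1 hrange
    exact Prod.ext rfl (Equiv.ext fun l => hα.injective (congrFun heq l))
  · intro g hg
    simp only [coe_filter, mem_univ, true_and, Set.mem_ofPred_eq] at hg
    have hmono : StrictMono (g ∘ Tuple.sort g) :=
      (Tuple.monotone_sort g).strictMono_of_injective (hg.comp (Tuple.sort g).injective)
    refine ⟨⟨g ∘ Tuple.sort g ∘ Fin.rev, (Tuple.sort g * Fin.revPerm)⁻¹⟩, ?_, ?_⟩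
    · simpa [Function.comp_assoc] using hmono.comp_strictAnti Fin.rev_strictAnti
    · funext l
      simp

/-- The Cauchy–Binet expansion, for an arbitrary alternating map in place of the determinant. -/
theorem alternatingMap_sum_smul_eq_sum_strictAnti {M P ι : Type*} [AddCommGroup M] [Module R M]
    [AddCommGroup P] [Module R P] [LinearOrder ι] [Fintype ι] {n : ℕ} (f : M [⋀^Fin n]→ₗ[R] P)
    (A : Matrix (Fin n) ι R) (e : ι → M) :
    f (fun l => ∑ j, A l j • e j) =
      ∑ α : Fin n → ι with StrictAnti α, (A.submatrix id α).det • f (e ∘ α) := by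
  have hperm (α : Fin n → ι) : (A.submatrix id α).det • f (e ∘ α) =
      ∑ σ : Equiv.Perm (Fin n), (∏ l, A l ((α ∘ σ) l)) • f (e ∘ (α ∘ σ)) := by
    rw [← Matrix.det_transpose, Matrix.det_apply, sum_smul]
    refine sum_congr rfl fun σ _ => ?_
    rw [← Function.comp_assoc, AlternatingMap.map_perm, smul_comm, smul_assoc]
    rfl
  calc f (fun l => ∑ j, A l j • e j)
      = ∑ g : Fin n → ι, (∏ l, A l (g l)) • f (e ∘ g) := by
        rw [← AlternatingMap.coe_multilinearMap, MultilinearMap.map_sum]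
        exact sum_congr rfl fun g _ => MultilinearMap.map_smul_univ _ _ _
    _ = ∑ g : Fin n → ι with Function.Injective g, (∏ l, A l (g l)) • f (e ∘ g) := by
        refine (sum_filter_of_ne fun g _ hg => ?_).symm
        by_contra hinj
        refine hg ?_
        rw [AlternatingMap.map_eq_zero_of_not_injective f _ fun h => hinj h.of_comp, smul_zero]
    _ = _ := by
        rw [sum_injective_eq_sum_strictAnti_sum_perm]
        exact sum_congr rfl fun α _ => (hperm α).symm

theorem prod_Ioi_eq_prod_ite {M : Type*} [CommMonoid M] {n : ℕ} (F : Fin n → Fin n → M) :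
    ∏ a, ∏ b ∈ Ioi a, F a b = ∏ a, ∏ b, if a < b then F a b else 1 := by
  refine prod_congr rfl fun a _ => ?_
  rw [← prod_filter, filter_lt_eq_Ioi]

theorem prod_Ioi_add {M : Type*} [CommMonoid M] {m n : ℕ} (F : Fin (m + n) → Fin (m + n) → M) :
    ∏ a, ∏ b ∈ Ioi a, F a b =
      (∏ a : Fin m, ∏ b ∈ Ioi a, F (Fin.castAdd n a) (Fin.castAdd n b)) *
      (∏ a : Fin n, ∏ b ∈ Ioi a, F (Fin.natAdd m a) (Fin.natAdd m b)) *
      ∏ a : Fin m, ∏ b : Fin n, F (Fin.castAdd n a) (Fin.natAdd m b) := by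
  have hlt (a : Fin m) (b : Fin n) : Fin.castAdd n a < Fin.natAdd m b :=
    Fin.lt_def.2 (a.isLt.trans_le (Nat.le_add_right m b))
  have hcast (a b : Fin m) : Fin.castAdd n a < Fin.castAdd n b ↔ a < b := Iff.rfl
  simp only [prod_Ioi_eq_prod_ite, Fin.prod_univ_add, hlt, (hlt _ _).not_gt, if_true, if_false,
    prod_const_one, mul_one, prod_mul_distrib, hcast, Fin.natAdd_lt_natAdd_iff]
  rw [mul_assoc, mul_comm (∏ x : Fin m, ∏ y : Fin n, _), ← mul_assoc]

theorem append_update_left {α : Type*} {m n : ℕ} (v : Fin m → α) (w : Fin n → α) (l : Fin m)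
    (z : α) : Fin.append (Function.update v l z) w =
      Function.update (Fin.append v w) (Fin.castAdd n l) z := by
  ext a
  refine Fin.addCases (fun a => ?_) (fun a => ?_) a
  · simp [Function.update_apply]
  · have hne : Fin.natAdd m a ≠ Fin.castAdd n l := by simp [Fin.ext_iff]; omega
    simp [Function.update_of_ne hne]

/-- The determinant of a square matrix whose last rows `W` are fixed, as an alternating map of its
first `m` rows. -/
noncomputable def detAppend {m n : ℕ} (W : Fin n → Fin (m + n) → R) :
    (Fin (m + n) → R) [⋀^Fin m]→ₗ[R] R where
  toFun v := Matrix.detRowAlternating (Fin.append v W)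
  map_update_add' {inst} v l x y := by
    cases Subsingleton.elim inst (instDecidableEqFin m)
    simp only [append_update_left, AlternatingMap.map_update_add]
  map_update_smul' {inst} v l c x := by
    cases Subsingleton.elim inst (instDecidableEqFin m)
    simp only [append_update_left, AlternatingMap.map_update_smul]
  map_eq_zero_of_eq' v a b hab hne :=
    AlternatingMap.map_eq_zero_of_eq _ (i := Fin.castAdd n a) (j := Fin.castAdd n b) _ (by simpa)
      (by simpa)

/-- The sign of a shuffle: `α` and `β` list complementary sets of columns in increasing order. -/
theorem sign_ofBijective_append {m n : ℕ} {α : Fin m → Fin (m + n)} {β : Fin n → Fin (m + n)}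
    (hα : StrictMono α) (hβ : StrictMono β) (h : Function.Bijective (Fin.append α β)) :
    (Equiv.Perm.sign (Equiv.ofBijective _ h) : ℤ) =
      ∏ l, ∏ k, if α l < β k then 1 else -1 := by
  have hα1 : ∏ a, ∏ b ∈ Ioi a, (if α a < α b then 1 else -1 : ℤ) = 1 :=
    prod_eq_one fun a _ => prod_eq_one fun b hb => if_pos (hα (mem_Ioi.1 hb))
  have hβ1 : ∏ a, ∏ b ∈ Ioi a, (if β a < β b then 1 else -1 : ℤ) = 1 :=
    prod_eq_one fun a _ => prod_eq_one fun b hb => if_pos (hβ (mem_Ioi.1 hb))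
  rw [Equiv.Perm.sign_eq_prod_prod_Ioi]
  push_cast [apply_ite (Units.val : ℤˣ → ℤ)]
  rw [prod_Ioi_add]
  simp [hα1, hβ1]

theorem detAppend_single {m n : ℕ} (W : Fin n → Fin (m + n) → R) {α : Fin m → Fin (m + n)}
    {β : Fin n → Fin (m + n)} (hα : StrictMono α) (hβ : StrictMono β) (hne : ∀ l k, α l ≠ β k) :
    detAppend W (fun l => Pi.single (α l) 1) =
      (∏ l, ∏ k, if α l < β k then 1 else -1) * (Matrix.of fun a b => W a (β b)).det := by
  have hbij : Function.Bijective (Fin.append α β) := Finite.injective_iff_bijective.1 <|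
    Fin.append_injective_iff.2 ⟨hα.injective, hβ.injective, hne⟩
  set M : Matrix (Fin (m + n)) (Fin (m + n)) R :=
    Matrix.of (Fin.append (fun l => Pi.single (α l) 1) W) with hM
  set π := Equiv.ofBijective _ hbij
  have hblock : (M.submatrix id π).submatrix finSumFinEquiv finSumFinEquiv =
      Matrix.fromBlocks 1 0 (Matrix.of fun k l => W k (α l)) (Matrix.of fun a b => W a (β b)) := by
    ext (a | a) (b | b) <;>
      simp [hM, π, Matrix.one_apply, Pi.single_apply, hα.injective.eq_iff, eq_comm, hne]
  have hdet : (M.submatrix id π).det = (Matrix.of fun a b => W a (β b)).det := by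
    rw [← Matrix.det_submatrix_equiv_self finSumFinEquiv, hblock, Matrix.det_fromBlocks_zero₁₂,
      Matrix.det_one, one_mul]
  have hsign : ((Equiv.Perm.sign π : ℤ) : R) = ∏ l, ∏ k, if α l < β k then 1 else -1 := by
    rw [sign_ofBijective_append hα hβ]
    push_cast
    rfl
  calc M.det = ((Equiv.Perm.sign π : ℤ) : R) * ((Equiv.Perm.sign π : ℤ) * M.det) := by
        rw [← mul_assoc, ← Int.cast_mul, Int.units_coe_mul_self, Int.cast_one, one_mul]
    _ = _ := by rw [← Matrix.det_permute', hdet, hsign]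

end Determinants

section Partitions

/-- A partition with at most `n` nonzero parts, as a sequence indexed from `0`. -/
structure IsPartition (n : ℕ) (ν : ℕ → ℕ) : Prop where
  antitone : Antitone ν
  eq_zero_of_le : ∀ k, n ≤ k → ν k = 0

theorem IsPartition.eq_of_forall_fin {n : ℕ} {ν ν' : ℕ → ℕ} (hν : IsPartition n ν)
    (hν' : IsPartition n ν') (h : ∀ k : Fin n, ν k = ν' k) : ν = ν' := funext fun k => by
  rcases lt_or_ge k n with hk | hk
  · exact h ⟨k, hk⟩
  · rw [hν.eq_zero_of_le k hk, hν'.eq_zero_of_le k hk]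

theorem extF_apply {n : ℕ} {m : Fin n → ℕ} (f : ∀ k, Fin (m k + 1)) (k : Fin n) :
    extF f k = f k := by
  simp [extF]

theorem extF_of_le {n : ℕ} {m : Fin n → ℕ} (f : ∀ k, Fin (m k + 1)) {k : ℕ} (hk : n ≤ k) :
    extF f k = 0 := by
  simp [extF, hk.not_gt]

theorem extF_injective {n : ℕ} {m : Fin n → ℕ} :
    Function.Injective (extF : (∀ k, Fin (m k + 1)) → ℕ → ℕ) := fun f g hfg => by
  funext k
  rw [Fin.ext_iff, ← extF_apply, hfg, extF_apply]

theorem eq_extF_iff {n : ℕ} {m : Fin n → ℕ} {f : ∀ k, Fin (m k + 1)} {ν : ℕ → ℕ}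
    (hν : ∀ k, n ≤ k → ν k = 0) : extF f = ν ↔ ∀ k, (f k : ℕ) = ν k := by
  refine ⟨fun h k => by rw [← h, extF_apply], fun h => funext fun k => ?_⟩
  rcases lt_or_ge k n with hk | hk
  · exact (extF_apply f ⟨k, hk⟩).trans (h ⟨k, hk⟩)
  · rw [extF_of_le f hk, hν k hk]

theorem isPartition_extF {n N : ℕ} {f : Fin n → Fin (N + 1)} (hf : Antitone f) :
    IsPartition n (extF fun k => f k) where
  antitone a b hab := by
    rcases lt_or_ge b n with hb | hb
    · simpa [extF, hb, hab.trans_lt hb] using hf (show ⟨a, hab.trans_lt hb⟩ ≤ ⟨b, hb⟩ from hab)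
    · simp [extF_of_le _ hb]
  eq_zero_of_le _ := extF_of_le _

/-- The partitions whose Young diagram fits in an `n × N` box: at most `n` parts, each at most
`N`. -/
noncomputable def boxPartitions (n N : ℕ) : Finset (ℕ → ℕ) :=
  (univ.filter fun f : Fin n → Fin (N + 1) => ∀ a b, a ≤ b → f b ≤ f a).map
    ⟨fun f => extF fun k => f k, extF_injective⟩

theorem extF_mem_boxPartitions {n N : ℕ} {f : Fin n → Fin (N + 1)} (hf : Antitone f) :
    (extF fun k => f k) ∈ boxPartitions n N :=
  mem_map.2 ⟨f, mem_filter.2 ⟨mem_univ f, fun _ _ hab => hf hab⟩, rfl⟩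

theorem mem_boxPartitions {n N : ℕ} {ν : ℕ → ℕ} :
    ν ∈ boxPartitions n N ↔ IsPartition n ν ∧ ∀ k, ν k ≤ N := by
  simp only [boxPartitions, mem_map, mem_filter, mem_univ, true_and, Function.Embedding.coeFn_mk]
  constructor
  · rintro ⟨f, hf, rfl⟩
    refine ⟨isPartition_extF fun a b => hf a b, fun k => ?_⟩
    unfold extF
    split_ifs
    exacts [Fin.is_le _, N.zero_le]
  · rintro ⟨hν, hN⟩
    exact ⟨fun k => ⟨ν k, Nat.lt_succ_of_le (hN k)⟩, fun a b hab => hν.antitone hab,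
      (eq_extF_iff hν.eq_zero_of_le).2 fun k => rfl⟩

theorem sum_boxPartitions {A : Type*} [AddCommMonoid A] {n N : ℕ} (F : (ℕ → ℕ) → A) :
    ∑ ν ∈ boxPartitions n N, F ν =
      ∑ f : Fin n → Fin (N + 1), if ∀ a b, a ≤ b → f b ≤ f a then F (extF fun k => f k) else 0 := by
  rw [boxPartitions, sum_map, sum_filter]
  rfl

section Conjugate

variable {n N : ℕ} {ν : ℕ → ℕ}

theorem IsPartition.lt_conjP_iff (hν : IsPartition n ν) {k m : ℕ} : k < conjP ν m ↔ m < ν k := by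
  classical
  have hex : ∃ c, ν c ≤ m := ⟨n, by simp [hν.eq_zero_of_le n le_rfl]⟩
  have hfind (k : ℕ) : m + 1 ≤ ν k ↔ k < Nat.find hex := by
    rw [Nat.lt_find_iff, Nat.succ_le_iff]
    exact ⟨fun h j hj => (h.trans_le (hν.antitone hj)).not_ge, fun h => not_le.1 (h k le_rfl)⟩
  have hcard : conjP ν m = Nat.find hex := by
    simp_rw [conjP, hfind]
    exact (Nat.card_congr Fin.equivSubtype.symm).trans (Nat.card_fin _)
  rw [hcard, ← hfind, Nat.succ_le_iff]

theorem conjP_mem_boxPartitions (hν : ν ∈ boxPartitions n N) : conjP ν ∈ boxPartitions N n := by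
  obtain ⟨hν, hN⟩ := mem_boxPartitions.1 hν
  refine mem_boxPartitions.2 ⟨⟨fun a b hab => ?_, fun c hc => ?_⟩, fun c => ?_⟩
  · exact le_of_forall_lt fun k hk => hν.lt_conjP_iff.2 (hab.trans_lt (hν.lt_conjP_iff.1 hk))
  · exact Nat.eq_zero_of_not_pos fun h => (hν.lt_conjP_iff.1 h).not_ge ((hN 0).trans hc)
  · exact not_lt.1 fun h => by simpa [hν.eq_zero_of_le n le_rfl] using hν.lt_conjP_iff.1 h

theorem conjP_conjP (hν : ν ∈ boxPartitions n N) : conjP (conjP ν) = ν := funext fun k =>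
  eq_of_forall_lt_iff fun m => by
    rw [(mem_boxPartitions.1 (conjP_mem_boxPartitions hν)).1.lt_conjP_iff,
      (mem_boxPartitions.1 hν).1.lt_conjP_iff]

theorem sum_conjP (hν : ν ∈ boxPartitions n N) :
    ∑ c : Fin N, conjP ν c = ∑ k : Fin n, ν k := by
  have hcount {a M : ℕ} (ha : a ≤ M) : a = ∑ j : Fin M, if (j : ℕ) < a then 1 else 0 := by
    rw [sum_boole, Nat.cast_id, Fin.card_filter_val_lt, min_eq_right ha]
  have hconj := (mem_boxPartitions.1 (conjP_mem_boxPartitions hν)).2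
  calc ∑ c : Fin N, conjP ν c
      = ∑ c : Fin N, ∑ k : Fin n, if (k : ℕ) < conjP ν c then 1 else 0 :=
        sum_congr rfl fun c _ => hcount (hconj c)
    _ = ∑ k : Fin n, ∑ c : Fin N, if (c : ℕ) < ν k then 1 else 0 := by
        simp only [(mem_boxPartitions.1 hν).1.lt_conjP_iff]
        exact sum_comm
    _ = ∑ k : Fin n, ν k := sum_congr rfl fun k _ => (hcount ((mem_boxPartitions.1 hν).2 k)).symm

end Conjugate

/-- The `β`-numbers `ν_k + n - k` of a partition with at most `n` parts: the exponents of the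
alternant that is the numerator of its Schur polynomial in `n` variables. -/
def betaNumbers (n : ℕ) (ν : ℕ → ℕ) (b : Fin n) : ℕ :=
  ν b + (n - 1 - b)

theorem IsPartition.strictAnti_betaNumbers {n : ℕ} {ν : ℕ → ℕ} (hν : IsPartition n ν) :
    StrictAnti (betaNumbers n ν) := fun a b hab => by
  have := hν.antitone (show (a : ℕ) ≤ b from hab.le)
  simp only [betaNumbers]
  omega

theorem antitone_add_val {n : ℕ} {α : Fin n → ℕ} (hα : StrictAnti α) :
    Antitone fun k => α k + k := by
  cases n with
  | zero => exact fun a => a.elim0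
  | succ n =>
    refine Fin.antitone_iff_succ_le.2 fun k => ?_
    have := hα k.castSucc_lt_succ
    simp only [Fin.val_succ, Fin.val_castSucc]
    omega

theorem exists_betaNumbers_eq {n N : ℕ} {α : Fin n → Fin (n + N)} (hα : StrictAnti α) :
    ∃ ν ∈ boxPartitions n N, ∀ l, betaNumbers n ν l = α l := by
  have hα' : Antitone fun k => (α k : ℕ) + k := antitone_add_val (α := fun k => α k) hα
  have hlow (l : Fin n) : n - 1 ≤ (α l : ℕ) + l := by
    have := hα' (show l ≤ ⟨n - 1, Nat.sub_one_lt_of_lt l.isLt⟩ from Nat.le_sub_one_of_lt l.isLt)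
    simp only at this
    omega
  have hup (l : Fin n) : (α l : ℕ) + l < n + N := by
    have := hα' (show ⟨0, l.pos⟩ ≤ l from Nat.zero_le _)
    simp only at this
    omega
  let ν (k : Fin n) : Fin (N + 1) := ⟨α k + k - (n - 1), by have := hup k; omega⟩
  have hν : Antitone ν := fun a b hab => Nat.sub_le_sub_right (hα' hab) _
  refine ⟨_, extF_mem_boxPartitions hν, fun l => ?_⟩
  have := hlow l
  rw [betaNumbers, extF_apply]
  simp only [ν]
  omega

theorem sum_strictAnti_eq_sum_boxPartitions {A : Type*} [AddCommMonoid A] {n N : ℕ}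
    {F : (Fin n → Fin (n + N)) → A} {G : (ℕ → ℕ) → A}
    (hFG : ∀ ν ∈ boxPartitions n N, ∀ α, (∀ l, (α l : ℕ) = betaNumbers n ν l) → F α = G ν) :
    ∑ α with StrictAnti α, F α = ∑ ν ∈ boxPartitions n N, G ν := by
  have hlt {ν} (hν : ν ∈ boxPartitions n N) (l : Fin n) : betaNumbers n ν l < n + N := by
    have := (mem_boxPartitions.1 hν).2 l
    rw [betaNumbers]
    omega
  symm
  refine sum_bij (fun ν hν l => ⟨betaNumbers n ν l, hlt hν l⟩) (fun ν hν => ?_)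
    (fun ν hν ν' hν' heq => ?_) (fun α hα => ?_) fun ν hν => (hFG ν hν _ fun _ => rfl).symm
  · exact mem_filter.2 ⟨mem_univ _, (mem_boxPartitions.1 hν).1.strictAnti_betaNumbers⟩
  · refine (mem_boxPartitions.1 hν).1.eq_of_forall_fin (mem_boxPartitions.1 hν').1 fun k => ?_
    simpa [betaNumbers] using congrFun heq k
  · obtain ⟨ν, hν, h⟩ := exists_betaNumbers_eq (mem_filter.1 hα).2
    exact ⟨ν, hν, funext fun l => Fin.ext (h l)⟩

theorem complConj_mem_boxPartitions {i h : ℕ} {lam : ℕ → ℕ} (hlam : lam ∈ boxPartitions h i) :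
    complConj i h lam ∈ boxPartitions i h := by
  obtain ⟨hconj, -⟩ := mem_boxPartitions.1 (conjP_mem_boxPartitions hlam)
  refine mem_boxPartitions.2 ⟨⟨fun a b hab => ?_, fun k hk => ?_⟩, fun k => ?_⟩ <;>
    simp only [complConj]
  · have := hconj.antitone (show i - 1 - b ≤ i - 1 - a by omega)
    split_ifs <;> omega
  · exact if_neg hk.not_gt
  · split_ifs <;> omega

theorem betaNumbers_complConj_lt_iff {i h : ℕ} {lam : ℕ → ℕ} (hlam : lam ∈ boxPartitions h i)
    (k : Fin i) (l : Fin h) :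
    betaNumbers i (complConj i h lam) k < betaNumbers h lam l ↔
      (l : ℕ) < conjP lam (i - 1 - k) := by
  have hiff := (mem_boxPartitions.1 hlam).1.lt_conjP_iff (k := l) (m := i - 1 - k)
  simp only [betaNumbers, complConj, k.isLt, if_true]
  omega

theorem betaNumbers_complConj_ne {i h : ℕ} {lam : ℕ → ℕ} (hlam : lam ∈ boxPartitions h i)
    (k : Fin i) (l : Fin h) :
    betaNumbers i (complConj i h lam) k ≠ betaNumbers h lam l := by
  have hiff := (mem_boxPartitions.1 hlam).1.lt_conjP_iff (k := l) (m := i - 1 - k)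
  simp only [betaNumbers, complConj, k.isLt, if_true]
  omega

end Partitions

section Strips

variable {n N : ℕ}

open Classical in
/-- The partitions `κ` in an `n × N` box such that `μ - κ` is a 0–1 vector. -/
noncomputable def verticalStrips (n N : ℕ) (μ : ℕ → ℕ) : Finset (ℕ → ℕ) :=
  {κ ∈ boxPartitions n N | ∀ k, κ k ≤ μ k ∧ μ k ≤ κ k + 1}

open Classical in
/-- The partitions `ρ` in an `n × N` box that interlace with `ν`, i.e. such that the skew diagram
`ν / ρ` has at most one cell in each column. -/
noncomputable def horizontalStrips (n N : ℕ) (ν : ℕ → ℕ) : Finset (ℕ → ℕ) :=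
  {ρ ∈ boxPartitions n N | ∀ c, ν (c + 1) ≤ ρ c ∧ ρ c ≤ ν c}

theorem mem_verticalStrips {μ κ : ℕ → ℕ} : κ ∈ verticalStrips n N μ ↔
    κ ∈ boxPartitions n N ∧ ∀ k, κ k ≤ μ k ∧ μ k ≤ κ k + 1 := by
  classical
  rw [verticalStrips, mem_filter]

theorem mem_horizontalStrips {ν ρ : ℕ → ℕ} : ρ ∈ horizontalStrips n N ν ↔
    ρ ∈ boxPartitions n N ∧ ∀ c, ν (c + 1) ≤ ρ c ∧ ρ c ≤ ν c := by
  classical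
  rw [horizontalStrips, mem_filter]

theorem conjP_interlaces_iff {μ κ : ℕ → ℕ} (hμ : IsPartition n μ) (hκ : IsPartition n κ) :
    (∀ c, conjP μ (c + 1) ≤ conjP κ c ∧ conjP κ c ≤ conjP μ c) ↔
      ∀ k, κ k ≤ μ k ∧ μ k ≤ κ k + 1 := by
  have hsucc (a b : ℕ) : a ≤ b + 1 ↔ ∀ c, c + 1 < a → c < b := by
    refine ⟨fun h c hc => by omega, fun h => not_lt.1 fun hab => (h b hab).false⟩
  simp only [forall_and, hsucc, ← forall_lt_iff_le, hμ.lt_conjP_iff, hκ.lt_conjP_iff]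
  rw [forall_comm, and_comm, forall_comm]

theorem sum_verticalStrips_conjP {A : Type*} [AddCommMonoid A] {μ : ℕ → ℕ}
    (hμ : μ ∈ boxPartitions n N) (F : (ℕ → ℕ) → A) :
    ∑ κ ∈ verticalStrips n N μ, F (conjP κ) = ∑ ρ ∈ horizontalStrips N n (conjP μ), F ρ := by
  have hpart {n N ν} (hν : ν ∈ boxPartitions n N) : IsPartition n ν := (mem_boxPartitions.1 hν).1
  refine sum_nbij' conjP conjP (fun κ hκ => ?_) (fun ρ hρ => ?_)
    (fun κ hκ => conjP_conjP (mem_verticalStrips.1 hκ).1)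
    (fun ρ hρ => conjP_conjP (mem_horizontalStrips.1 hρ).1)
    fun _ _ => rfl
  · obtain ⟨hbox, hκ⟩ := mem_verticalStrips.1 hκ
    exact mem_horizontalStrips.2 ⟨conjP_mem_boxPartitions hbox,
      (conjP_interlaces_iff (hpart hμ) (hpart hbox)).2 hκ⟩
  · obtain ⟨hbox, hρ⟩ := mem_horizontalStrips.1 hρ
    have hbox' := conjP_mem_boxPartitions hbox
    refine mem_verticalStrips.2 ⟨hbox', (conjP_interlaces_iff (hpart hμ) (hpart hbox')).1 ?_⟩
    rwa [conjP_conjP hbox]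

theorem sum_verticalStrips {A : Type*} [AddCommMonoid A] (μ : Fin n → Fin (N + 1))
    (F : (ℕ → ℕ) → A) :
    ∑ κ ∈ verticalStrips n N (extF fun k => μ k), F κ =
      ∑ x : Fin n → Fin 2,
        if (∀ k, (x k : ℕ) ≤ μ k) ∧ ∀ a b, a ≤ b → (μ b : ℕ) - x b ≤ μ a - x a then
          F (extF fun k => (⟨μ k - x k, (Nat.sub_le _ _).trans_lt (μ k).isLt⟩ : Fin (N + 1)))
        else 0 := by
  rw [← sum_filter]
  symm
  refine sum_bij
    (fun x _ => extF fun k => (⟨μ k - x k, (Nat.sub_le _ _).trans_lt (μ k).isLt⟩ : Fin (N + 1)))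
    (fun x hx => ?_) (fun x hx x' hx' heq => funext fun k => ?_) (fun κ hκ => ?_) fun _ _ => rfl
  · obtain ⟨-, hanti⟩ := (mem_filter.1 hx).2
    refine mem_verticalStrips.2 ⟨extF_mem_boxPartitions fun a b => hanti a b, fun k => ?_⟩
    rcases lt_or_ge k n with hk | hk
    · have := (x ⟨k, hk⟩).isLt
      simp only [extF, hk, dif_pos]
      omega
    · simp [extF_of_le _ hk]
  · have := congrArg Fin.val (congrFun (extF_injective heq) k)
    have := (mem_filter.1 hx).2.1 k
    have := (mem_filter.1 hx').2.1 k
    simp only at *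
    omega
  · obtain ⟨hbox, hκ⟩ := mem_verticalStrips.1 hκ
    have hκ' (k : Fin n) : κ k ≤ μ k ∧ μ k ≤ κ k + 1 := by
      simpa only [extF_apply] using hκ k
    have hsub (k : Fin n) : (μ k : ℕ) - (μ k - κ k) = κ k := Nat.sub_sub_self (hκ' k).1
    refine ⟨fun k => ⟨μ k - κ k, by have := hκ' k; omega⟩, ?_, ?_⟩
    · refine mem_filter.2 ⟨mem_univ _, fun k => Nat.sub_le _ _, fun a b hab => ?_⟩
      simpa only [hsub] using (mem_boxPartitions.1 hbox).1.antitone hab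
    · exact (eq_extF_iff (mem_boxPartitions.1 hbox).1.eq_zero_of_le).2 hsub

theorem sum_horizontalStrips {A : Type*} [AddCommMonoid A] {ν : ℕ → ℕ}
    (hν : ν ∈ boxPartitions n N) (F : (Fin n → ℕ) → A) :
    ∑ ρ ∈ horizontalStrips n N ν, F (fun c => ρ c) =
      ∑ ρ ∈ Fintype.piFinset fun c : Fin n => Icc (ν (c + 1)) (ν c), F ρ := by
  obtain ⟨hν, hN⟩ := mem_boxPartitions.1 hν
  refine sum_bij (fun ρ _ c => ρ c) (fun ρ hρ => ?_)
    (fun ρ hρ ρ' hρ' heq => ?_) (fun ρ hρ => ?_) fun _ _ => rfl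
  · exact Fintype.mem_piFinset.2 fun c => mem_Icc.2 ((mem_horizontalStrips.1 hρ).2 c)
  · exact (mem_boxPartitions.1 (mem_horizontalStrips.1 hρ).1).1.eq_of_forall_fin
      (mem_boxPartitions.1 (mem_horizontalStrips.1 hρ').1).1 (congrFun heq)
  · simp only [Fintype.mem_piFinset, mem_Icc] at hρ
    let ρ' (c : ℕ) : ℕ := if hc : c < n then ρ ⟨c, hc⟩ else 0
    have hρ' (c : ℕ) : ν (c + 1) ≤ ρ' c ∧ ρ' c ≤ ν c := by
      rcases lt_or_ge c n with hc | hc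
      · simpa [ρ', hc] using hρ ⟨c, hc⟩
      · simp [ρ', hc.not_gt, hν.eq_zero_of_le _ (hc.trans c.le_succ)]
    refine ⟨ρ', mem_horizontalStrips.2
      ⟨mem_boxPartitions.2 ⟨⟨?_, fun c hc => ?_⟩, fun c => ?_⟩, hρ'⟩, ?_⟩
    · exact antitone_nat_of_succ_le fun c => (hρ' (c + 1)).2.trans (hρ' c).1
    · simp [ρ', hc.not_gt]
    · exact (hρ' c).2.trans (hN c)
    · simp [ρ']

end Strips

section Alternants

variable {R : Type*} [CommRing R] {n : ℕ}

/-- The alternant `det (x_a ^ e_b)`. -/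
def alternant (x : Fin n → R) (e : Fin n → ℕ) : R :=
  (Matrix.of fun a b => x a ^ e b).det

theorem betaNumbers_zero (b : Fin n) : betaNumbers n 0 b = b.rev := by
  simp only [betaNumbers, Pi.zero_apply, Fin.val_rev]
  omega

theorem alternant_betaNumbers_zero (x : Fin n → R) :
    alternant x (betaNumbers n 0) = ∏ a, ∏ b ∈ Ioi a, (x a - x b) := by
  rw [alternant, show (Matrix.of fun a b => x a ^ betaNumbers n 0 b) =
    Matrix.projVandermonde 1 x from ?_, Matrix.det_projVandermonde]
  · simp
  · ext a b
    simp [Matrix.projVandermonde_apply, betaNumbers_zero]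

theorem alternant_betaNumbers_zero_append {m : ℕ} (y : Fin m → R) (w : Fin n → R) :
    alternant (Fin.append y w) (betaNumbers (m + n) 0) =
      alternant y (betaNumbers m 0) * alternant w (betaNumbers n 0) *
        ∏ l, ∏ k, (y l - w k) := by
  simp only [alternant_betaNumbers_zero]
  rw [prod_Ioi_add]
  simp only [Fin.append_left, Fin.append_right]

/-- The exponent `|∁λ~|` of the sign counts the inversions between the `β`-numbers of `λ` and those
of `∁λ~`. -/
theorem prod_betaNumbers_lt_eq_neg_one_pow {i h : ℕ} {lam : ℕ → ℕ}
    (hlam : lam ∈ boxPartitions h i) :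
    (∏ l, ∏ k, if betaNumbers i (complConj i h lam) k < betaNumbers h lam l then 1 else -1 : R) =
      (-1) ^ ∑ k : Fin i, complConj i h lam k := by
  have hconj := (mem_boxPartitions.1 (conjP_mem_boxPartitions hlam)).2
  rw [prod_comm, ← prod_pow_eq_pow_sum]
  refine prod_congr rfl fun k _ => ?_
  simp only [betaNumbers_complConj_lt_iff hlam]
  rw [prod_ite, prod_const_one, one_mul, prod_const]
  congr 1
  have hcard := card_filter_add_card_filter_not (s := (univ : Finset (Fin h)))
    fun l => (l : ℕ) < conjP lam (i - 1 - k)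
  rw [Fin.card_filter_val_lt, min_eq_right (hconj _), card_univ, Fintype.card_fin] at hcard
  simp only [complConj, k.isLt, if_true]
  omega

theorem alternant_append_eq_detAppend {i h : ℕ} (y : Fin h → R) (w : Fin i → R) :
    alternant (Fin.append y w) (betaNumbers (h + i) 0) =
      detAppend (fun k j => w k ^ (j.rev : ℕ))
        fun l => ∑ j, Matrix.of (fun l (j : Fin (h + i)) => y l ^ (j : ℕ)) l j •
          Pi.single j.rev (1 : R) := by
  refine congrArg Matrix.det (Matrix.ext fun a b => ?_)
  refine Fin.addCases (fun a => ?_) (fun a => ?_) a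
  · have hrev (j : Fin (h + i)) : b = j.rev ↔ j = b.rev := by rw [eq_comm, Fin.rev_eq_iff]
    simp [betaNumbers_zero, Pi.single_apply, hrev]
  · simp [betaNumbers_zero]

theorem detAppend_single_rev {i h : ℕ} {lam : ℕ → ℕ} (hlam : lam ∈ boxPartitions h i)
    (w : Fin i → R) {α : Fin h → Fin (h + i)} (hα : ∀ l, (α l : ℕ) = betaNumbers h lam l) :
    detAppend (fun k j => w k ^ (j.rev : ℕ)) (fun l => Pi.single (α l).rev 1) =
      (-1) ^ (∑ k : Fin i, complConj i h lam k) *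
        alternant w (betaNumbers i (complConj i h lam)) := by
  obtain ⟨hcompl, hle⟩ := mem_boxPartitions.1 (complConj_mem_boxPartitions hlam)
  let β (k : Fin i) : Fin (h + i) := ⟨betaNumbers i (complConj i h lam) k, by
    have := hle k
    simp only [betaNumbers]
    omega⟩
  have hα' : StrictMono fun l => (α l).rev := fun a b hab => Fin.rev_lt_rev.2 <| by
    rw [Fin.lt_def, hα, hα]
    exact (mem_boxPartitions.1 hlam).1.strictAnti_betaNumbers hab
  have hβ : StrictMono fun k => (β k).rev := fun a b hab =>
    Fin.rev_lt_rev.2 (hcompl.strictAnti_betaNumbers hab)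
  have hne (l k) : (α l).rev ≠ (β k).rev := fun heq =>
    betaNumbers_complConj_ne hlam k l <| by rw [← hα, Fin.rev_injective heq]
  have hlt (l k) : (α l).rev < (β k).rev ↔
      betaNumbers i (complConj i h lam) k < betaNumbers h lam l := by
    rw [← hα]
    exact Fin.rev_lt_rev
  rw [detAppend_single _ hα' hβ hne, ← prod_betaNumbers_lt_eq_neg_one_pow hlam]
  simp only [hlt, Fin.rev_rev, alternant, β]

/-- The dual Cauchy identity, obtained by expanding the Vandermonde determinant of all the variables
along the rows belonging to `y`. -/
theorem alternant_mul_alternant_mul_prod_sub {i h : ℕ} (y : Fin h → R) (w : Fin i → R) :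
    alternant y (betaNumbers h 0) * alternant w (betaNumbers i 0) * ∏ l, ∏ k, (y l - w k) =
      ∑ lam ∈ boxPartitions h i, (-1) ^ (∑ k : Fin i, complConj i h lam k) *
        alternant y (betaNumbers h lam) * alternant w (betaNumbers i (complConj i h lam)) := by
  rw [← alternant_betaNumbers_zero_append, alternant_append_eq_detAppend,
    alternatingMap_sum_smul_eq_sum_strictAnti]
  refine sum_strictAnti_eq_sum_boxPartitions fun lam hlam α hα => ?_
  have hy : (Matrix.of fun l b => y l ^ (α b : ℕ)).det = alternant y (betaNumbers h lam) := by
    simp only [alternant, hα]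
  calc (Matrix.of fun l b => y l ^ (α b : ℕ)).det *
        detAppend (fun k j => w k ^ (j.rev : ℕ)) (fun l => Pi.single (α l).rev 1) = _ := by
        rw [hy, detAppend_single_rev hlam w hα]
        ring

theorem det_aeval_eq_sum_boxPartitions {S : Type*} [CommRing S] [Algebra R S] {M : ℕ}
    {p : Fin n → Polynomial R} (hp : ∀ b, (p b).natDegree < n + M) (x : Fin n → S) :
    (Matrix.of fun a b => Polynomial.aeval (x a) (p b)).det =
      ∑ ν ∈ boxPartitions n M, (Matrix.of fun b c => (p b).coeff (betaNumbers n ν c)).det •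
        alternant x (betaNumbers n ν) := by
  let A : Matrix (Fin n) (Fin (n + M)) S := Matrix.of fun b j => algebraMap R S ((p b).coeff j)
  have hrows : (Matrix.of fun a b => Polynomial.aeval (x a) (p b)).transpose =
      Matrix.of fun b => ∑ j, A b j • fun a => x a ^ (j : ℕ) := by
    ext b a
    simp [A, Polynomial.aeval_eq_sum_range' (hp b), sum_range, Algebra.smul_def]
  rw [← Matrix.det_transpose, hrows]
  refine (alternatingMap_sum_smul_eq_sum_strictAnti Matrix.detRowAlternating A _).trans <|
    sum_strictAnti_eq_sum_boxPartitions fun ν _ α hα => ?_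
  have hx : (Matrix.of fun b a => x a ^ (α b : ℕ)).det = alternant x (betaNumbers n ν) := by
    rw [alternant, ← Matrix.det_transpose]
    simp only [Matrix.transpose, Matrix.of_apply, hα]
  have hA : (A.submatrix id α).det =
      algebraMap R S (Matrix.of fun b c => (p b).coeff (betaNumbers n ν c)).det := by
    simp only [RingHom.map_det, ← hα]
    rfl
  rw [smul_eq_mul, hA, Algebra.smul_def, ← hx]
  rfl

theorem map_alternant {S : Type*} [CommRing S] (f : R →+* S) (x : Fin n → R) (e : Fin n → ℕ) :
    f (alternant x e) = alternant (fun a => f (x a)) e := by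
  rw [alternant, RingHom.map_det]
  congr 1
  ext a b
  simp

theorem isHomogeneous_alternant_X {τ : Type*} (f : Fin n → τ) (e : Fin n → ℕ) :
    (alternant (fun a => (X (f a) : MvPolynomial τ R)) e).IsHomogeneous (∑ b, e b) := by
  rw [alternant, Matrix.det_apply]
  refine IsHomogeneous.sum _ _ _ fun σ _ => ?_
  have hprod := IsHomogeneous.prod univ (fun b => (X (f (σ b)) : MvPolynomial τ R) ^ e b) e
    fun b _ => by simpa using (isHomogeneous_X R (f (σ b))).pow (e b)
  rw [Units.smul_def]
  exact (homogeneousSubmodule τ R _).toAddSubgroup.zsmul_mem hprod _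

theorem alternant_X_ne_zero [IsDomain R] {τ : Type*} {f : Fin n → τ} (hf : Function.Injective f) :
    alternant (fun a => (X (f a) : MvPolynomial τ R)) (betaNumbers n 0) ≠ 0 := by
  rw [alternant_betaNumbers_zero]
  exact prod_ne_zero_iff.2 fun a _ => prod_ne_zero_iff.2 fun b hb =>
    sub_ne_zero.2 fun heq => (mem_Ioi.1 hb).ne (hf (X_injective heq))

end Alternants

section StripDeterminants

variable {R : Type*} [CommRing R] {n N : ℕ} {ν : ℕ → ℕ}

theorem det_sum_Icc_eq_sum_horizontalStrips (hν : ν ∈ boxPartitions n N) (φ : Fin n → ℕ → R) :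
    (Matrix.of fun k c : Fin n => ∑ t ∈ Icc (ν (c + 1)) (ν c), φ k (t + (n - 1 - c))).det =
      ∑ ρ ∈ horizontalStrips n N ν, (Matrix.of fun k c => φ k (betaNumbers n ρ c)).det := by
  simp only [betaNumbers]
  rw [sum_horizontalStrips hν fun ρ : Fin n → ℕ =>
    (Matrix.of fun k c => φ k (ρ c + (n - 1 - c))).det, ← Matrix.det_transpose]
  have hcols : (Matrix.of fun k c : Fin n =>
      ∑ t ∈ Icc (ν (c + 1)) (ν c), φ k (t + (n - 1 - c))).transpose =
        Matrix.of fun c : Fin n => ∑ t ∈ Icc (ν (c + 1)) (ν c), fun k => φ k (t + (n - 1 - c)) := by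
    ext c k
    simp
  rw [hcols]
  refine (Matrix.detRowAlternating.toMultilinearMap.map_sum_finset
    (fun (c : Fin n) (t : ℕ) (k : Fin n) => φ k (t + (n - 1 - c)))
    fun c : Fin n => Icc (ν (c + 1)) (ν c)).trans <| sum_congr rfl fun ρ _ => ?_
  rw [← Matrix.det_transpose]
  rfl

/-- Subtracting from each column the next one turns the partial sums into sums over intervals. -/
theorem det_sum_range_eq_sum_horizontalStrips (hν : ν ∈ boxPartitions n N)
    (φ : Fin n → ℕ → R) :
    (Matrix.of fun k c => ∑ t ∈ range (betaNumbers n ν c + 1), φ k t).det =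
      ∑ ρ ∈ horizontalStrips n N ν, (Matrix.of fun k c => φ k (betaNumbers n ρ c)).det := by
  rw [← det_sum_Icc_eq_sum_horizontalStrips hν]
  have hshift (k c : Fin n) : ∑ t ∈ Icc (ν (c + 1)) (ν c), φ k (t + (n - 1 - c)) =
      ∑ t ∈ Ico (ν (c + 1) + (n - 1 - c)) (betaNumbers n ν c + 1), φ k t := by
    rw [betaNumbers, add_right_comm, ← sum_Ico_add']
    rfl
  simp only [hshift]
  obtain ⟨hν, -⟩ := mem_boxPartitions.1 hν
  obtain - | n := n
  · simp
  rw [← Matrix.det_submatrix_equiv_self Fin.revPerm,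
    ← Matrix.det_submatrix_equiv_self Fin.revPerm (Matrix.of fun k c =>
      ∑ t ∈ Ico (ν (c + 1) + (n + 1 - 1 - c)) (betaNumbers (n + 1) ν c + 1), φ k t)]
  refine Matrix.det_eq_of_forall_col_eq_smul_add_pred (fun _ => 1) (fun k => ?_) fun k j => ?_
  · simp [hν.eq_zero_of_le]
  · have hrev : ((j.castSucc.rev : Fin (n + 1)) : ℕ) = j.succ.rev + 1 := by
      simp only [Fin.val_rev, Fin.val_castSucc, Fin.val_succ]
      omega
    have hle : ν (j.succ.rev + 1) ≤ ν j.succ.rev := hν.antitone (Nat.le_succ _)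
    simp only [Matrix.submatrix_apply, Matrix.of_apply, Fin.revPerm_apply, one_mul, betaNumbers,
      hrev]
    rw [show ν (j.succ.rev + 1) + (n + 1 - 1 - j.succ.rev) =
      ν (j.succ.rev + 1) + (n + 1 - 1 - (j.succ.rev + 1)) + 1 by omega,
      add_comm (∑ t ∈ Ico _ _, _), sum_range_add_sum_Ico _ (by omega)]

end StripDeterminants

section Coefficients

theorem coeff_sum_range_neg_X_pow {R : Type*} [CommRing R] {K m : ℕ} (hm : m < K) :
    (∑ r ∈ range K, (-Polynomial.X : Polynomial R) ^ r).coeff m = (-1) ^ m := by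
  have hterm (r : ℕ) : (-Polynomial.X : Polynomial R) ^ r =
      Polynomial.C ((-1) ^ r) * Polynomial.X ^ r := by
    rw [neg_pow]
    simp
  simp only [hterm, Polynomial.finsetSum_coeff, Polynomial.coeff_C_mul_X_pow]
  simp [hm]

/-- The polynomial `(X - 1) ^ b * ∑_{r < K} (-X) ^ r`, a truncation of `(X - 1) ^ b / (1 + X)`: the
substitution of `x_a` in it is the `(a, b)` entry of the alternant in the variables `x_a - 1`
multiplied by the inverses of the `1 + x_a`. -/
noncomputable def shiftedGeom (K b : ℕ) : Polynomial ℤ :=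
  (Polynomial.X - 1) ^ b * ∑ r ∈ range K, (-Polynomial.X) ^ r

theorem natDegree_shiftedGeom_le (K b : ℕ) : (shiftedGeom K b).natDegree ≤ b + K := by
  refine Polynomial.natDegree_mul_le.trans (add_le_add ?_ ?_)
  · rw [← Polynomial.C_1, (Polynomial.monic_X_sub_C 1).natDegree_pow, Polynomial.natDegree_X_sub_C,
      mul_one]
  · refine Polynomial.natDegree_sum_le_of_forall_le _ _ fun r hr => ?_
    refine Polynomial.natDegree_pow_le.trans ?_
    rw [Polynomial.natDegree_neg, Polynomial.natDegree_X, mul_one]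
    exact (mem_range.1 hr).le

theorem coeff_shiftedGeom {K m : ℕ} (b : ℕ) (hm : m < K) :
    (shiftedGeom K b).coeff m = (-1) ^ b * ((-1) ^ m * ∑ t ∈ range (m + 1), (b.choose t : ℤ)) := by
  rw [shiftedGeom, Polynomial.coeff_mul, Nat.sum_antidiagonal_eq_sum_range_succ_mk, mul_sum,
    mul_sum]
  refine sum_congr rfl fun t ht => ?_
  have htm : t ≤ m := mem_range_succ_iff.1 ht
  have hcoeff : ((Polynomial.X - 1 : Polynomial ℤ) ^ b).coeff t = (-1) ^ (b - t) * b.choose t := by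
    simpa [sub_eq_add_neg] using Polynomial.coeff_X_add_C_pow (-1 : ℤ) b t
  simp only [hcoeff, coeff_sum_range_neg_X_pow ((Nat.sub_le m t).trans_lt hm)]
  rcases le_or_gt t b with htb | hbt
  · have hsign : (-1 : ℤ) ^ (b - t + (m - t)) = (-1) ^ (b + m) :=
      neg_one_pow_congr (by simp only [Nat.even_iff]; omega)
    rw [← mul_assoc ((-1) ^ b), ← pow_add, ← hsign, pow_add]
    ring
  · simp [Nat.choose_eq_zero_of_lt hbt]

theorem det_coeff_shiftedGeom {i d K : ℕ} {ν : ℕ → ℕ} (hν : ν ∈ boxPartitions i d)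
    (hK : d + i ≤ K) (A : ℕ → ℕ) :
    (Matrix.of fun b c => (shiftedGeom K (betaNumbers i A b)).coeff (betaNumbers i ν c)).det =
      (-1) ^ (∑ b, betaNumbers i A b) * ((-1) ^ (∑ c, betaNumbers i ν c) *
        ∑ ρ ∈ horizontalStrips i d ν, Edet i A ρ) := by
  have hlt (c : Fin i) : betaNumbers i ν c < K := by
    have := (mem_boxPartitions.1 hν).2 c
    simp only [betaNumbers]
    omega
  simp only [coeff_shiftedGeom _ (hlt _)]
  rw [← prod_pow_eq_pow_sum, ← prod_pow_eq_pow_sum]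
  refine (Matrix.det_mul_column _ (Matrix.of fun b c => (-1) ^ betaNumbers i ν c *
    ∑ t ∈ range (betaNumbers i ν c + 1), ((betaNumbers i A b).choose t : ℤ))).trans
      (congrArg _ ?_)
  refine (Matrix.det_mul_row _ (Matrix.of fun b c =>
    ∑ t ∈ range (betaNumbers i ν c + 1), ((betaNumbers i A b).choose t : ℤ))).trans
      (congrArg _ ?_)
  exact det_sum_range_eq_sum_horizontalStrips hν fun b t => ((betaNumbers i A b).choose t : ℤ)

theorem sum_betaNumbers (n : ℕ) (ν : ℕ → ℕ) :
    ∑ b, betaNumbers n ν b = ∑ b : Fin n, ν b + ∑ b, betaNumbers n 0 b := by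
  simp [betaNumbers, sum_add_distrib]

theorem neg_one_pow_mul_det_coeff_shiftedGeom {i d K : ℕ} {μ : ℕ → ℕ} (hμ : μ ∈ boxPartitions d i)
    (hK : d + i ≤ K) (A : ℕ → ℕ) :
    (-1) ^ (∑ k : Fin i, A k) *
        (Matrix.of fun b c =>
          (shiftedGeom K (betaNumbers i A b)).coeff (betaNumbers i (conjP μ) c)).det =
      (-1) ^ (∑ k : Fin d, μ k) * ∑ κ ∈ verticalStrips d i μ, Edet i A (conjP κ) := by
  rw [det_coeff_shiftedGeom (conjP_mem_boxPartitions hμ) hK, sum_betaNumbers i A,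
    sum_betaNumbers i (conjP μ), sum_conjP hμ, sum_verticalStrips_conjP hμ, ← mul_assoc,
    ← mul_assoc, ← pow_add, ← pow_add]
  congr 1
  exact neg_one_pow_congr (by simp only [Nat.even_iff]; omega)

end Coefficients

section HomogeneousComponents

variable {σ R : Type*} [CommRing R] {P Q : MvPolynomial σ R} {d q : ℕ}

theorem homogeneousComponent_add_mul_of_isHomogeneous (hQ : Q.IsHomogeneous q) :
    homogeneousComponent (d + q) (P * Q) = homogeneousComponent d P * Q := by
  let := gradedAlgebra (σ := σ) (R := R)
  simp only [← decomposition.decompose'_apply]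
  exact DirectSum.coe_decompose_mul_add_of_right_mem (homogeneousSubmodule σ R) hQ

theorem homogeneousComponent_mul_of_isHomogeneous_of_lt (hQ : Q.IsHomogeneous q) (hd : d < q) :
    homogeneousComponent d (P * Q) = 0 := by
  let := gradedAlgebra (σ := σ) (R := R)
  simp only [← decomposition.decompose'_apply]
  exact DirectSum.coe_decompose_mul_of_right_mem_of_not_le (homogeneousSubmodule σ R) hQ hd.not_ge

theorem neg_one_pow_mul_hsymX (i h r : ℕ) : (-1) ^ r * hsymX i h r =
    ∑ f ∈ Nat.antidiagonalTuple i r, ∏ k, (-X (Sum.inl k)) ^ f k := by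
  rw [hsymX, mul_sum]
  refine sum_congr rfl fun f hf => ?_
  rw [← Nat.mem_antidiagonalTuple.1 hf, ← prod_pow_eq_pow_sum, ← prod_mul_distrib]
  exact prod_congr rfl fun k _ => (neg_pow _ _).symm

theorem sum_range_neg_one_pow_mul_hsymX (i h : ℕ) {K : ℕ} (hK : d < K) :
    ∑ r ∈ range (d + 1), (-1) ^ r * hsymX i h r =
      ∑ f ∈ Fintype.piFinset fun _ : Fin i => range K with ∑ k, f k ∈ range (d + 1),
        ∏ k, (-X (Sum.inl k)) ^ f k := by
  rw [← sum_fiberwise_of_maps_to (t := range (d + 1)) (g := fun f : Fin i → ℕ => ∑ k, f k)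
    fun f hf => (mem_filter.1 hf).2]
  refine sum_congr rfl fun r hr => ?_
  rw [neg_one_pow_mul_hsymX]
  refine sum_congr (ext fun f => ?_) fun _ _ => rfl
  simp only [Nat.mem_antidiagonalTuple, mem_filter, Fintype.mem_piFinset, mem_range] at hr ⊢
  refine ⟨fun hf => ⟨⟨fun a => ?_, hf ▸ hr⟩, hf⟩, And.right⟩
  have := single_le_sum (f := f) (fun _ _ => Nat.zero_le _) (mem_univ a)
  omega

theorem homogeneousComponent_mul_sum_hsymX {i h K : ℕ} (hK : d < K)
    (P : MvPolynomial (Fin i ⊕ Fin h) ℤ) :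
    homogeneousComponent d (P * ∑ r ∈ range (d + 1), (-1) ^ r * hsymX i h r) =
      homogeneousComponent d (P * ∏ a, ∑ r ∈ range K, (-X (Sum.inl a)) ^ r) := by
  rw [sum_range_neg_one_pow_mul_hsymX i h hK, prod_univ_sum, ← sum_filter_add_sum_filter_not
    (Fintype.piFinset fun _ : Fin i => range K) fun f => ∑ k, f k ∈ range (d + 1), mul_add, map_add,
    left_eq_add, mul_sum, map_sum]
  refine sum_eq_zero fun f hf => ?_
  have hhom : (∏ k, (-X (Sum.inl k) : MvPolynomial (Fin i ⊕ Fin h) ℤ) ^ f k).IsHomogeneous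
      (∑ k, f k) := IsHomogeneous.prod _ _ _ fun k _ => by
    simpa using (isHomogeneous_X ℤ (Sum.inl k : Fin i ⊕ Fin h)).neg.pow (f k)
  refine homogeneousComponent_mul_of_isHomogeneous_of_lt hhom ?_
  simpa [Nat.lt_succ_iff] using (mem_filter.1 hf).2

end HomogeneousComponents

section ThomPolynomial

/-- A family of polynomials, indexed by partitions with at most `n` parts, that satisfies the
bialternant formula; its members are the Schur polynomials in `n` variables. -/
def IsSchurFamily (n : ℕ) (S : (ℕ → ℕ) → MvPolynomial (Fin n) ℤ) : Prop :=
  ∀ ν : ℕ → ℕ, Antitone ν → (∀ k, n ≤ k → ν k = 0) →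
    S ν * ∏ q ∈ univ.filter (fun q : Fin n × Fin n => q.1 < q.2), (X q.1 - X q.2) =
      (Matrix.of fun a b : Fin n =>
        (X a : MvPolynomial (Fin n) ℤ) ^ (ν (b : ℕ) + (n - 1 - (b : ℕ)))).det

theorem IsSchurFamily.rename_mul_alternant {n : ℕ} {S : (ℕ → ℕ) → MvPolynomial (Fin n) ℤ}
    (hS : IsSchurFamily n S) {ν : ℕ → ℕ} (hν : IsPartition n ν) {τ : Type*} (f : Fin n → τ) :
    rename f (S ν) * alternant (fun a => X (f a)) (betaNumbers n 0) =
      alternant (fun a => X (f a)) (betaNumbers n ν) := by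
  have hprod : ∏ q ∈ univ.filter (fun q : Fin n × Fin n => q.1 < q.2),
      (X q.1 - X q.2 : MvPolynomial (Fin n) ℤ) = alternant X (betaNumbers n 0) := by
    rw [alternant_betaNumbers_zero, prod_Ioi_eq_prod_ite, prod_filter, Fintype.prod_prod_type]
  have hbialternant : S ν * alternant X (betaNumbers n 0) = alternant X (betaNumbers n ν) :=
    hprod ▸ hS ν hν.antitone hν.eq_zero_of_le
  have hrename (e : Fin n → ℕ) : rename f (alternant (X : _ → MvPolynomial (Fin n) ℤ) e) =
      alternant (fun a => X (f a)) e := by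
    simpa using map_alternant (rename f : MvPolynomial (Fin n) ℤ →ₐ[ℤ] _).toRingHom X e
  rw [← hrename, ← hrename, ← map_mul, hbialternant]

theorem prod_sum_mul_alternant_sub_one {A : Type*} [CommRing A] {i M K : ℕ} {e : Fin i → ℕ}
    (he : ∀ b, e b + K < i + M) (x : Fin i → A) :
    (∏ a, ∑ r ∈ range K, (-x a) ^ r) * alternant (fun a => x a - 1) e =
      ∑ ν ∈ boxPartitions i M,
        (Matrix.of fun b c => (shiftedGeom K (e b)).coeff (betaNumbers i ν c)).det •
          alternant x (betaNumbers i ν) := by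
  rw [← det_aeval_eq_sum_boxPartitions
    (fun b => (natDegree_shiftedGeom_le K (e b)).trans_lt (he b)), alternant,
    ← Matrix.det_mul_column]
  congr 1
  ext a b
  simp [shiftedGeom, mul_comm]

theorem prod_mul_alternant_mul_alternant_eq_sum {A : Type*} [CommRing A] {i h : ℕ} (K : ℕ)
    (x : Fin i → A) (y : Fin h → A) :
    ((∏ k, ∏ l, (1 + y l - x k)) * ∏ a, ∑ r ∈ range K, (-x a) ^ r) *
        (alternant x (betaNumbers i 0) * alternant y (betaNumbers h 0)) =
      ∑ lam ∈ boxPartitions h i, ∑ ν ∈ boxPartitions i (h + K),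
        ((-1) ^ (∑ k : Fin i, complConj i h lam k) * (Matrix.of fun b c =>
          (shiftedGeom K (betaNumbers i (complConj i h lam) b)).coeff (betaNumbers i ν c)).det) •
        (alternant x (betaNumbers i ν) * alternant y (betaNumbers h lam)) := by
  have hx : alternant x (betaNumbers i 0) = alternant (fun a => x a - 1) (betaNumbers i 0) := by
    simp only [alternant_betaNumbers_zero, sub_sub_sub_cancel_right]
  have hprod : ∏ k, ∏ l, (1 + y l - x k) = ∏ l, ∏ k, (y l - (x k - 1)) := by
    rw [prod_comm]
    exact prod_congr rfl fun l _ => prod_congr rfl fun k _ => by ring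
  calc _ = (∏ a, ∑ r ∈ range K, (-x a) ^ r) * (alternant y (betaNumbers h 0) *
        alternant (fun a => x a - 1) (betaNumbers i 0) * ∏ l, ∏ k, (y l - (x k - 1))) := by
        rw [hx, hprod]
        ring
    _ = ∑ lam ∈ boxPartitions h i, ((-1) ^ (∑ k : Fin i, complConj i h lam k) *
        alternant y (betaNumbers h lam)) * ((∏ a, ∑ r ∈ range K, (-x a) ^ r) *
          alternant (fun a => x a - 1) (betaNumbers i (complConj i h lam))) := by
        rw [alternant_mul_alternant_mul_prod_sub, mul_sum]
        exact sum_congr rfl fun lam _ => by ring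
    _ = _ := sum_congr rfl fun lam hlam => by
        have he (b : Fin i) : betaNumbers i (complConj i h lam) b + K < i + (h + K) := by
          have := (mem_boxPartitions.1 (complConj_mem_boxPartitions hlam)).2 b
          simp only [betaNumbers]
          omega
        rw [prod_sum_mul_alternant_sub_one he, mul_sum]
        refine sum_congr rfl fun ν _ => ?_
        simp only [zsmul_eq_mul]
        push_cast
        ring

theorem sum_boxPartitions_conjP {A : Type*} [AddCommMonoid A] {i d M : ℕ} (hM : d ≤ M) (s : ℕ)
    (F : (ℕ → ℕ) → A) :
    ∑ ν ∈ boxPartitions i M with s + ∑ c : Fin i, ν c = d, F ν =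
      ∑ μ ∈ boxPartitions d i with s + ∑ k : Fin d, μ k = d, F (conjP μ) := by
  have hbox {ν} (hν : ν ∈ boxPartitions i M) (hs : s + ∑ c : Fin i, ν c = d) :
      ν ∈ boxPartitions i d := by
    obtain ⟨hpart, -⟩ := mem_boxPartitions.1 hν
    refine mem_boxPartitions.2 ⟨hpart, fun k => ?_⟩
    rcases lt_or_ge k i with hk | hk
    · have := single_le_sum (f := fun c : Fin i => ν c) (fun _ _ => Nat.zero_le _)
        (mem_univ ⟨k, hk⟩)
      simp only at this
      omega
    · simp [hpart.eq_zero_of_le k hk]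
  have hmem {ν} (hν : ν ∈ boxPartitions i d) : ν ∈ boxPartitions i M :=
    mem_boxPartitions.2 ((mem_boxPartitions.1 hν).imp_right fun h k => (h k).trans hM)
  refine sum_nbij' conjP conjP (fun ν hν => ?_) (fun μ hμ => ?_) (fun ν hν => ?_)
    (fun μ hμ => conjP_conjP (mem_filter.1 hμ).1) fun ν hν => ?_
  · obtain ⟨hν, hs⟩ := mem_filter.1 hν
    exact mem_filter.2 ⟨conjP_mem_boxPartitions (hbox hν hs), by rwa [sum_conjP (hbox hν hs)]⟩
  · obtain ⟨hμ, hs⟩ := mem_filter.1 hμ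
    exact mem_filter.2 ⟨hmem (conjP_mem_boxPartitions hμ), by rwa [sum_conjP hμ]⟩
  · exact conjP_conjP (mem_filter.1 hν).1
  · rw [conjP_conjP (mem_filter.1 hν).1]

theorem homogeneousComponent_alternant_mul_alternant {i h : ℕ} (d : ℕ) (lam ν : ℕ → ℕ) (z : ℤ) :
    homogeneousComponent (d + (∑ b, betaNumbers i 0 b + ∑ b, betaNumbers h 0 b))
        (z • (alternant (fun a => (X (Sum.inl a) : MvPolynomial (Fin i ⊕ Fin h) ℤ))
          (betaNumbers i ν) * alternant (fun a => X (Sum.inr a)) (betaNumbers h lam))) =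
      if ∑ l : Fin h, lam l + ∑ c : Fin i, ν c = d then
        z • (alternant (fun a => X (Sum.inl a)) (betaNumbers i ν) *
          alternant (fun a => X (Sum.inr a)) (betaNumbers h lam)) else 0 := by
  have hhom := (isHomogeneous_alternant_X (R := ℤ) (Sum.inl : _ → Fin i ⊕ Fin h)
    (betaNumbers i ν)).mul (isHomogeneous_alternant_X Sum.inr (betaNumbers h lam))
  rw [map_zsmul, homogeneousComponent_of_mem hhom, sum_betaNumbers i ν, sum_betaNumbers h lam,
    smul_ite, smul_zero]
  exact if_congr (by omega) rfl rfl

theorem thom_polynomial_sigma_i1_general (i h d : ℕ) {Sx : (ℕ → ℕ) → MvPolynomial (Fin i) ℤ}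
    {Sy : (ℕ → ℕ) → MvPolynomial (Fin h) ℤ} (hSx : IsSchurFamily i Sx)
    (hSy : IsSchurFamily h Sy) :
    homogeneousComponent d
        ((∏ k : Fin i, ∏ l : Fin h,
          (1 + X (Sum.inr l) - X (Sum.inl k) : MvPolynomial (Fin i ⊕ Fin h) ℤ)) *
            ∑ r ∈ range (d + 1), (-1) ^ r * hsymX i h r) =
      ∑ lam ∈ boxPartitions h i,
        ∑ mu ∈ boxPartitions d i with ∑ l : Fin h, lam l + ∑ k : Fin d, mu k = d,
          C ((-1) ^ (∑ k : Fin d, mu k) *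
              ∑ κ ∈ verticalStrips d i mu, Edet i (complConj i h lam) (conjP κ)) *
            rename Sum.inl (Sx (conjP mu)) * rename Sum.inr (Sy lam) := by
  have hVx := alternant_X_ne_zero (R := ℤ) (Sum.inl_injective (α := Fin i) (β := Fin h))
  have hVy := alternant_X_ne_zero (R := ℤ) (Sum.inr_injective (α := Fin i) (β := Fin h))
  refine mul_right_cancel₀ (mul_ne_zero hVx hVy) ?_
  rw [homogeneousComponent_mul_sum_hsymX (K := d + i + 1) (by omega),
    ← homogeneousComponent_add_mul_of_isHomogeneous
      ((isHomogeneous_alternant_X _ _).mul (isHomogeneous_alternant_X _ _)),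
    prod_mul_alternant_mul_alternant_eq_sum, map_sum, sum_mul]
  refine sum_congr rfl fun lam hlam => ?_
  rw [map_sum, sum_congr rfl fun ν _ => homogeneousComponent_alternant_mul_alternant d lam ν _,
    ← sum_filter, sum_boxPartitions_conjP (by omega), sum_mul]
  refine sum_congr rfl fun mu hmu => ?_
  obtain ⟨hmu, -⟩ := mem_filter.1 hmu
  have hconj := (mem_boxPartitions.1 (conjP_mem_boxPartitions hmu)).1
  rw [neg_one_pow_mul_det_coeff_shiftedGeom hmu (by omega), ← hSx.rename_mul_alternant hconj,
    ← hSy.rename_mul_alternant (mem_boxPartitions.1 hlam).1, zsmul_eq_mul, ← eq_intCast C]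
  ring

end ThomPolynomial

theorem thom_polynomial_sigma_i1 (i h : ℕ) (hi : 1 ≤ i) (hh : 1 ≤ h)
    (Sx : (ℕ → ℕ) → MvPolynomial (Fin i) ℤ)
    (Sy : (ℕ → ℕ) → MvPolynomial (Fin h) ℤ)
    -- bialternant characterization of the Schur polynomials in the x-variables:
    (hSx : ∀ nu : ℕ → ℕ, Antitone nu → (∀ k, i ≤ k → nu k = 0) →
      Sx nu * ∏ q ∈ Finset.univ.filter (fun q : Fin i × Fin i => q.1 < q.2),
          (X q.1 - X q.2)
        = (Matrix.of fun a b : Fin i =>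
            (X a : MvPolynomial (Fin i) ℤ) ^ (nu (b : ℕ) + (i - 1 - (b : ℕ)))).det)
    -- bialternant characterization of the Schur polynomials in the y-variables:
    (hSy : ∀ nu : ℕ → ℕ, Antitone nu → (∀ k, h ≤ k → nu k = 0) →
      Sy nu * ∏ q ∈ Finset.univ.filter (fun q : Fin h × Fin h => q.1 < q.2),
          (X q.1 - X q.2)
        = (Matrix.of fun a b : Fin h =>
            (X a : MvPolynomial (Fin h) ℤ) ^ (nu (b : ℕ) + (h - 1 - (b : ℕ)))).det) :
    MvPolynomial.homogeneousComponent (i * h - i + 1)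
        ((∏ k : Fin i, ∏ l : Fin h,
            (1 + X (Sum.inr l) - X (Sum.inl k) : MvPolynomial (Fin i ⊕ Fin h) ℤ))
          * ∑ r ∈ Finset.range ((i * h - i + 1) + 1), (-1) ^ r * hsymX i h r)
      = ∑ lam : Fin h → Fin (i + 1),
          if (∀ a b : Fin h, a ≤ b → lam b ≤ lam a) then
            ∑ mu : Fin (i * h - i + 1) → Fin (i + 1),
              if (∀ a b : Fin (i * h - i + 1), a ≤ b → mu b ≤ mu a) ∧
                  ((∑ l : Fin h, (lam l : ℕ)) + (∑ k : Fin (i * h - i + 1), (mu k : ℕ))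
                    = i * h - i + 1) then
                C ((-1 : ℤ) ^ (∑ k : Fin (i * h - i + 1), (mu k : ℕ))
                    * ∑ x : Fin (i * h - i + 1) → Fin 2,
                        if (∀ k : Fin (i * h - i + 1), (x k : ℕ) ≤ (mu k : ℕ)) ∧
                            (∀ a b : Fin (i * h - i + 1), a ≤ b →
                              (mu b : ℕ) - (x b : ℕ) ≤ (mu a : ℕ) - (x a : ℕ)) then
                          Edet i (complConj i h (extF (fun k => lam k)))
                            (conjP (extF (fun k =>
                              (⟨(mu k : ℕ) - (x k : ℕ),
                                lt_of_le_of_lt (Nat.sub_le _ _) (mu k).isLt⟩ : Fin (i + 1)))))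
                        else 0)
                  * rename Sum.inl (Sx (conjP (extF (fun k => mu k))))
                  * rename Sum.inr (Sy (extF (fun k => lam k)))
              else 0
          else 0 := by
  simpa only [sum_boxPartitions, sum_filter, extF_apply, sum_verticalStrips, ite_and] using
    thom_polynomial_sigma_i1_general i h (i * h - i + 1) hSx hSy
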